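/- arXiv:1509.05688 — 2 statements merged into one kernel-verified Lean document; each statement's English description precedes it below -/
import Mathlib

section
/- Let a be an element of infinite order in a group G. Then there is a group homomorphism Δ from the intersector I_G(a) to the multiplicative group ℚˣ of nonzero rationals such that whenever g ∈ I_G(a) and m, n are nonzero integers with g a^m g⁻¹ = a^n, one has Δ(g) = m/n. (In particular the ratio m/n depends only on g and not on the choice of m, n.) -/
/-- The intersector of an element `a` in a group `G`: the set of `g ∈ G` such that
`g⟨a⟩g⁻¹ ∩ ⟨a⟩ ≠ {1}`. -/
def intersector {G : Type*} [Group G] (a : G) : Set G :=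
  {g : G | ∃ x : G, x ∈ Subgroup.zpowers a ∧ x ≠ 1 ∧ g * x * g⁻¹ ∈ Subgroup.zpowers a}

theorem aux_conj_pow {G : Type*} [Group G] {a g : G} {m n : ℤ}
    (h : g * a ^ m * g⁻¹ = a ^ n) (k : ℤ) : g * a ^ (m * k) * g⁻¹ = a ^ (n * k) := by
  rw [zpow_mul, zpow_mul, ← h, conj_zpow]

theorem aux_mul {G : Type*} [Group G] {a g h : G} {m n p q : ℤ}
    (hg : g * a ^ m * g⁻¹ = a ^ n) (hh : h * a ^ p * h⁻¹ = a ^ q) :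
    (g * h) * a ^ (m * p) * (g * h)⁻¹ = a ^ (n * q) := by
  have h1 := aux_conj_pow hh m
  have h2 := aux_conj_pow hg q
  calc (g * h) * a ^ (m * p) * (g * h)⁻¹ = g * (h * a ^ (p * m) * h⁻¹) * g⁻¹ := by
        rw [mul_comm m p]; group
    _ = a ^ (n * q) := by rw [h1, mul_comm q m, h2]

theorem aux_inv {G : Type*} [Group G] {a g : G} {m n : ℤ}
    (hg : g * a ^ m * g⁻¹ = a ^ n) : g⁻¹ * a ^ n * g⁻¹⁻¹ = a ^ m := by
  rw [← hg]; simp [mul_assoc]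

theorem aux_mem {G : Type*} [Group G] {a : G} (ha : ¬ IsOfFinOrder a) (g : G) :
    g ∈ intersector a ↔ ∃ m n : ℤ, m ≠ 0 ∧ n ≠ 0 ∧ g * a ^ m * g⁻¹ = a ^ n := by
  have inj := injective_zpow_iff_not_isOfFinOrder.2 ha
  constructor
  · rintro ⟨x, ⟨m, rfl⟩, hx, ⟨n, hn⟩⟩
    refine ⟨m, n, ?_, ?_, hn.symm⟩
    · rintro rfl; simp at hx
    · rintro rfl
      apply hx
      simpa [eq_comm, conj_eq_one_iff] using hn
  · rintro ⟨m, n, hm, hn, h⟩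
    refine ⟨a ^ m, ⟨m, rfl⟩, ?_, ⟨n, h.symm⟩⟩
    intro h0
    exact hm (inj (by simpa using h0))

theorem aux_uniq {G : Type*} [Group G] {a g : G} (ha : ¬ IsOfFinOrder a) {m n p q : ℤ}
    (hn : n ≠ 0) (hq : q ≠ 0)
    (h : g * a ^ m * g⁻¹ = a ^ n) (h' : g * a ^ p * g⁻¹ = a ^ q) :
    (m : ℚ) / n = (p : ℚ) / q := by
  have inj := injective_zpow_iff_not_isOfFinOrder.2 ha
  have h1 := aux_conj_pow (aux_inv h) q
  have h2 := aux_conj_pow (aux_inv h') n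
  rw [mul_comm q n, h1] at h2
  have h3 : m * q = p * n := inj h2
  rw [div_eq_div_iff (by exact_mod_cast hn) (by exact_mod_cast hq)]
  exact_mod_cast h3

/-- For `a` of infinite order, the intersector `I_G(a)` is a subgroup, and there is a
group homomorphism `Δ : I_G(a) →* ℚˣ` (the modular homomorphism) such that whenever
`g ∈ I_G(a)` and `g * a^m * g⁻¹ = a^n` with `m, n ≠ 0`, one has `Δ(g) = m / n`. -/
theorem modular_homomorphism_exists {G : Type*} [Group G] (a : G)
    (ha : ¬ IsOfFinOrder a) :
    ∃ S : Subgroup G, (S : Set G) = intersector a ∧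
      ∃ Δ : S →* ℚˣ, ∀ (g : S) (m n : ℤ), m ≠ 0 → n ≠ 0 →
        (g : G) * a ^ m * (g : G)⁻¹ = a ^ n → ((Δ g : ℚˣ) : ℚ) = (m : ℚ) / (n : ℚ) := by
  let S : Subgroup G :=
    { carrier := intersector a
      one_mem' := (aux_mem ha 1).2 ⟨1, 1, one_ne_zero, one_ne_zero, by simp⟩
      mul_mem' := by
        intro g h hg hh
        obtain ⟨m, n, hm, hn, e⟩ := (aux_mem ha g).1 hg
        obtain ⟨p, q, hp, hq, f⟩ := (aux_mem ha h).1 hh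
        exact (aux_mem ha _).2 ⟨m * p, n * q, mul_ne_zero hm hp, mul_ne_zero hn hq, aux_mul e f⟩
      inv_mem' := by
        intro g hg
        obtain ⟨m, n, hm, hn, e⟩ := (aux_mem ha g).1 hg
        exact (aux_mem ha _).2 ⟨n, m, hn, hm, aux_inv e⟩ }
  have key : ∀ g : S, ∃ m n : ℤ, m ≠ 0 ∧ n ≠ 0 ∧ (g : G) * a ^ m * (g : G)⁻¹ = a ^ n :=
    fun g => (aux_mem ha _).1 g.2
  choose M N hM hN hMN using key
  refine ⟨S, rfl, MonoidHom.mk' (fun g => Units.mk0 ((M g : ℚ) / N g)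
    (div_ne_zero (by exact_mod_cast hM g) (by exact_mod_cast hN g))) ?_, ?_⟩
  · intro g h
    ext
    have := aux_uniq ha (hN (g * h)) (mul_ne_zero (hN g) (hN h)) (hMN (g * h))
      (aux_mul (hMN g) (hMN h))
    simp only [Units.val_mk0, Units.val_mul]
    rw [this]
    push_cast
    rw [mul_div_mul_comm]
  · intro g m n hm hn h
    exact aux_uniq ha (hN g) hn (hMN g) h
end

section
/- Let G be a CT group which is not balanced. Then G contains a subgroup isomorphic to G_{r,s} for some nonzero coprime integers r, s with |r| ≠ |s|. Indeed, if g a^r g⁻¹ = a^s in G with a, g of infinite order and r, s nonzero coprime with |r| ≠ |s|, then ⟨a, g⟩ ≅ G_{r,s}. -/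
/-- The rational `s / r` as a unit of `ℚ` (junk value `1` if `s / r = 0`). -/
def grsUnit (r s : ℤ) : ℚˣ :=
  if h : ((s : ℚ) / (r : ℚ)) = 0 then 1 else Units.mk0 _ h

/-- Multiplication by `s / r` as an automorphism of the additive group `ℚ`,
viewed multiplicatively. -/
def grsAut (r s : ℤ) : MulAut (Multiplicative ℚ) :=
  AddEquiv.toMultiplicative (DistribMulAction.toAddAut ℚˣ ℚ (grsUnit r s))

/-- The action of `ℤ` on `ℚ` in which the generator acts by multiplication by `s / r`. -/
def grsAction (r s : ℤ) : Multiplicative ℤ →* MulAut (Multiplicative ℚ) :=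
  zpowersHom (MulAut (Multiplicative ℚ)) (grsAut r s)

/-- The ambient semidirect product `ℚ ⋊ ℤ`, with the generator of `ℤ` acting on `ℚ`
by multiplication by `s / r`. -/
abbrev GrsAmbient (r s : ℤ) : Type :=
  SemidirectProduct (Multiplicative ℚ) (Multiplicative ℤ) (grsAction r s)

/-- The element `(1, e)` of `ℚ ⋊ ℤ`. -/
def grsA (r s : ℤ) : GrsAmbient r s :=
  ⟨Multiplicative.ofAdd (1 : ℚ), 1⟩

/-- The element `(0, t)` of `ℚ ⋊ ℤ`. -/
def grsT (r s : ℤ) : GrsAmbient r s :=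
  ⟨1, Multiplicative.ofAdd (1 : ℤ)⟩

/-- The group `G_{r,s} = ℤ[1/(rs)] ⋊ ℤ`, realised as the subgroup of `ℚ ⋊ ℤ`
generated by the elements `(1, e)` and `(0, t)` (for coprime `r, s` the subgroup of
`ℚ` generated by the `ℤ`-orbit of `1` under multiplication by `s/r` is exactly
`ℤ[1/(rs)]`). -/
def Grs (r s : ℤ) : Subgroup (GrsAmbient r s) :=
  Subgroup.closure {grsA r s, grsT r s}

/-- The element `(1, e)` of `G_{r,s}`. -/
def grsOne (r s : ℤ) : Grs r s :=
  ⟨grsA r s, Subgroup.subset_closure (Set.mem_insert _ _)⟩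

/-- A group `G` is balanced if for every element `x` of infinite order and all integers
`m, n`, if `x ^ m` is conjugate in `G` to `x ^ n` then `|m| = |n|`. -/
def IsBalanced (G : Type*) [Group G] : Prop :=
  ∀ x : G, ¬ IsOfFinOrder x → ∀ m n : ℤ, (∃ g : G, g * x ^ m * g⁻¹ = x ^ n) → |m| = |n|

/-- A group is CT (commutative transitive) if commuting is transitive on nontrivial
elements. -/
def IsCT (G : Type*) [Group G] : Prop :=
  ∀ a b c : G, a ≠ 1 → b ≠ 1 → c ≠ 1 → Commute a b → Commute b c → Commute a c

theorem grs_half {G : Type*} [Group G] (hct : IsCT G) (g d : G) (r s : ℤ)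
    (hd : ¬ IsOfFinOrder d) (hs : s ≠ 0) (hrs : IsCoprime r s)
    (h : g * d ^ r * g⁻¹ = d ^ s) :
    ∃ b : G, b ^ r = d ∧ b ^ s = g * d * g⁻¹ := by
  obtain ⟨x, y, hxy⟩ := hrs
  have hd1 : d ≠ 1 := by rintro rfl; exact hd IsOfFinOrder.one
  have hds : d ^ s ≠ 1 := fun hh => hd (isOfFinOrder_iff_zpow_eq_one.2 ⟨s, hs, hh⟩)
  have hc1 : g * d * g⁻¹ ≠ 1 := by
    intro hh; apply hd1; rwa [conj_eq_one_iff] at hh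
  have hcr : (g * d * g⁻¹) ^ r = d ^ s := by rw [conj_zpow, h]
  have hcom : Commute d (g * d * g⁻¹) := by
    refine hct d (d ^ s) _ hd1 hds hc1 ((Commute.refl d).zpow_right s) ?_
    rw [← hcr]
    exact (Commute.refl _).zpow_left r
  generalize g * d * g⁻¹ = c at *
  have hm : ∀ k : ℤ, (d ^ x * c ^ y) ^ k = d ^ (x * k) * c ^ (y * k) := by
    intro k
    rw [((hcom.zpow_left x).zpow_right y).mul_zpow, zpow_mul, zpow_mul]
  refine ⟨d ^ x * c ^ y, ?_, ?_⟩
  · rw [hm, mul_comm y r, zpow_mul c, hcr, ← zpow_mul, ← zpow_add,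
      mul_comm s y, hxy, zpow_one]
  · rw [hm, mul_comm x s, zpow_mul d, ← hcr, ← zpow_mul, ← zpow_add,
      mul_comm r x, hxy, zpow_one]

theorem grs_step {G : Type*} [Group G] (hct : IsCT G) (g d : G) (r s : ℤ)
    (hd : ¬ IsOfFinOrder d) (hs : s ≠ 0) (hrs : IsCoprime r s)
    (h : g * d ^ r * g⁻¹ = d ^ s) :
    ∃ e : G, e ^ (r * s) = d ∧ e ^ (s * s) = g * d * g⁻¹ ∧ e ^ (r * r) = g⁻¹ * d * g ∧
      g * e ^ r * g⁻¹ = e ^ s ∧ ¬ IsOfFinOrder e := by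
  obtain ⟨b, hb1, hb2⟩ := grs_half hct g d r s hd hs hrs h
  have hbr : g * b ^ r * g⁻¹ = b ^ s := by rw [hb1, hb2]
  have hbi : ¬ IsOfFinOrder b := fun hh => hd (hb1 ▸ hh.zpow)
  obtain ⟨c, hc1, hc2⟩ := grs_half hct g b r s hbi hs hrs hbr
  have key : ∀ k : ℤ, (g⁻¹ * c * g) ^ k = g⁻¹ * c ^ k * g := by
    intro k
    simpa using conj_zpow (a := g⁻¹) (b := c) (i := k)
  have e1 : (g⁻¹ * c * g) ^ s = b := by
    rw [key, hc2]; group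
  have e2 : (g⁻¹ * c * g) ^ r = g⁻¹ * b * g := by
    rw [key, hc1]
  have key2 : ∀ k : ℤ, (g⁻¹ * b * g) ^ k = g⁻¹ * b ^ k * g := by
    intro k
    simpa using conj_zpow (a := g⁻¹) (b := b) (i := k)
  have e3 : (g⁻¹ * c * g) ^ (r * s) = d := by
    rw [mul_comm r s, zpow_mul, e1, hb1]
  refine ⟨g⁻¹ * c * g, e3, ?_, ?_, ?_, fun hh => hd (e3 ▸ hh.zpow)⟩
  · rw [zpow_mul, e1, hb2]
  · rw [zpow_mul, e2, key2, hb1]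
  · rw [e1, e2]; group

theorem grs_seq {G : Type*} [Group G] (hct : IsCT G) (g a : G) (r s : ℤ)
    (ha : ¬ IsOfFinOrder a) (hs : s ≠ 0) (hrs : IsCoprime r s)
    (h : g * a ^ r * g⁻¹ = a ^ s) :
    ∃ d : ℕ → G, d 0 = a ∧ ∀ k, (d (k+1)) ^ (r * s) = d k ∧
      (d (k+1)) ^ (s * s) = g * d k * g⁻¹ ∧ (d (k+1)) ^ (r * r) = g⁻¹ * d k * g ∧
      g * (d k) ^ r * g⁻¹ = (d k) ^ s ∧ ¬ IsOfFinOrder (d k) := by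
  have step : ∀ d : {d : G // g * d ^ r * g⁻¹ = d ^ s ∧ ¬ IsOfFinOrder d},
      ∃ e : {d : G // g * d ^ r * g⁻¹ = d ^ s ∧ ¬ IsOfFinOrder d},
        e.1 ^ (r * s) = d.1 ∧ e.1 ^ (s * s) = g * d.1 * g⁻¹ ∧
          e.1 ^ (r * r) = g⁻¹ * d.1 * g := by
    rintro ⟨d, h1, h2⟩
    obtain ⟨e, p1, p2, p3, p4, p5⟩ := grs_step hct g d r s h2 hs hrs h1
    exact ⟨⟨e, p4, p5⟩, p1, p2, p3⟩
  choose f hf using step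
  let D : ℕ → {d : G // g * d ^ r * g⁻¹ = d ^ s ∧ ¬ IsOfFinOrder d} :=
    fun n => Nat.rec ⟨a, h, ha⟩ (fun _ x => f x) n
  exact ⟨fun n => (D n).1, rfl, fun k => ⟨(hf (D k)).1, (hf (D k)).2.1, (hf (D k)).2.2,
    (D k).2.1, (D k).2.2⟩⟩

theorem grs_pow {G : Type*} [Group G] (g d : G) (r s : ℤ)
    (h : g * d ^ r * g⁻¹ = d ^ s) (k : ℕ) :
    g ^ k * d ^ (r ^ k) * (g ^ k)⁻¹ = d ^ (s ^ k) := by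
  induction k with
  | zero => simp
  | succ k ih =>
    calc g ^ (k+1) * d ^ (r ^ (k+1)) * (g ^ (k+1))⁻¹
        = g * (g ^ k * d ^ (r ^ k) * (g ^ k)⁻¹) ^ r * g⁻¹ := by
          rw [conj_zpow, ← zpow_mul, ← pow_succ, pow_succ' g]; group
      _ = g * (d ^ r) ^ (s ^ k) * g⁻¹ := by
          rw [ih, ← zpow_mul, ← zpow_mul, mul_comm]
      _ = (g * d ^ r * g⁻¹) ^ (s ^ k) := by rw [conj_zpow]
      _ = d ^ (s ^ (k+1)) := by rw [h, ← zpow_mul, pow_succ']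

theorem grs_nocomm {G : Type*} [Group G] (g d : G) (r s : ℤ)
    (hd : ¬ IsOfFinOrder d) (habs : |r| ≠ |s|)
    (h : g * d ^ r * g⁻¹ = d ^ s) (k : ℕ) (hk : k ≠ 0) : ¬ Commute (g ^ k) d := by
  intro hc
  have h1 := grs_pow g d r s h k
  rw [(hc.zpow_right _).eq, mul_inv_cancel_right] at h1
  have h2 : r ^ k = s ^ k := injective_zpow_iff_not_isOfFinOrder.2 hd h1
  apply habs
  have h3 : |r| ^ k = |s| ^ k := by rw [← abs_pow, ← abs_pow, h2]
  exact (pow_left_inj₀ (abs_nonneg _) (abs_nonneg _) hk).1 h3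

theorem grsUnit_val (r s : ℤ) (hr : r ≠ 0) (hs : s ≠ 0) :
    ((grsUnit r s : ℚˣ) : ℚ) = s / r := by
  have : ((s : ℚ) / (r : ℚ)) ≠ 0 := by positivity
  simp [grsUnit, hr, hs]

theorem grsAut_apply (r s : ℤ) (hr : r ≠ 0) (hs : s ≠ 0) (q : Multiplicative ℚ) :
    (grsAut r s q).toAdd = s / r * q.toAdd := by
  rw [← grsUnit_val r s hr hs]; rfl

theorem grsT_mul_left (r s : ℤ) (hr : r ≠ 0) (hs : s ≠ 0) (y : GrsAmbient r s) :
    (grsT r s * y).left.toAdd = s / r * y.left.toAdd := by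
  rw [SemidirectProduct.mul_left, ← grsAut_apply r s hr hs]
  have h1 : (grsT r s).left = 1 := rfl
  have h2 : grsAction r s (grsT r s).right = grsAut r s := by
    change zpowersHom _ (grsAut r s) (Multiplicative.ofAdd 1) = _
    simp
  rw [h1, h2, one_mul]

theorem grsT_inv_mul_left (r s : ℤ) (hr : r ≠ 0) (hs : s ≠ 0) (y : GrsAmbient r s) :
    ((grsT r s)⁻¹ * y).left.toAdd = r / s * y.left.toAdd := by
  have h := grsT_mul_left r s hr hs ((grsT r s)⁻¹ * y)
  rw [mul_inv_cancel_left] at h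
  rw [h]
  have : (r : ℚ) ≠ 0 := by exact_mod_cast hr
  have : (s : ℚ) ≠ 0 := by exact_mod_cast hs
  field_simp

theorem grs_main {G : Type*} [Group G] (hct : IsCT G) (a g : G) (r s : ℤ)
    (ha : ¬ IsOfFinOrder a) (hr : r ≠ 0) (hs : s ≠ 0)
    (hrs : IsCoprime r s) (habs : |r| ≠ |s|) (h : g * a ^ r * g⁻¹ = a ^ s) :
    Nonempty ((Subgroup.closure {a, g} : Subgroup G) ≃* Grs r s) := by
  obtain ⟨d, hd0, hd⟩ := grs_seq hct g a r s ha hs hrs h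
  have hrq : (r : ℚ) ≠ 0 := by exact_mod_cast hr
  have hsq : (s : ℚ) ≠ 0 := by exact_mod_cast hs
  have hda : ∀ N : ℕ, d N ^ ((r * s) ^ N) = a := by
    intro N
    induction N with
    | zero => simp [hd0]
    | succ N ih => rw [pow_succ', zpow_mul, (hd N).1, ih]
  let Γ : Subgroup (G × GrsAmbient r s) := Subgroup.closure {(a, grsA r s), (g, grsT r s)}
  have inv : ∀ z ∈ Γ, ∃ (N : ℕ) (m : ℤ), z.1 = d N ^ m * g ^ z.2.right.toAdd ∧
      z.2.left.toAdd = m / ((r * s : ℚ) ^ N) := by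
    intro z hz
    induction hz using Subgroup.closure_induction_left with
    | one => exact ⟨0, 0, by simp, by simp⟩
    | mul_left x hx y hy ih =>
      obtain ⟨N, m, h1, h2⟩ := ih
      rcases hx with rfl | rfl
      · refine ⟨N, (r * s) ^ N + m, ?_, ?_⟩
        · simp [grsA, h1, zpow_add, hda, mul_assoc]
        · simp [grsA, h2]
          field_simp
      · refine ⟨N + 1, s * s * m, ?_, ?_⟩
        · rw [zpow_mul, (hd N).2.1, conj_zpow]
          simp [grsT, h1, zpow_add, mul_assoc]
        · rw [Prod.snd_mul, grsT_mul_left r s hr hs, h2]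
          push_cast
          field_simp
          ring
    | inv_mul_cancel x hx y hy ih =>
      obtain ⟨N, m, h1, h2⟩ := ih
      rcases hx with rfl | rfl
      · refine ⟨N, -(r * s) ^ N + m, ?_, ?_⟩
        · simp [grsA, h1, zpow_add, hda, mul_assoc]
        · simp [grsA, h2]
          field_simp
      · refine ⟨N + 1, r * r * m, ?_, ?_⟩
        · have := conj_zpow (a := g⁻¹) (b := d N) (i := m)
          rw [inv_inv] at this
          rw [zpow_mul, (hd N).2.2.1, this]
          simp [grsT, h1, zpow_add, mul_assoc]
        · rw [Prod.snd_mul, Prod.snd_inv, grsT_inv_mul_left r s hr hs, h2]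
          push_cast
          field_simp
          ring
  let p1 : Γ →* G := (MonoidHom.fst G (GrsAmbient r s)).comp Γ.subtype
  let p2 : Γ →* GrsAmbient r s := (MonoidHom.snd G (GrsAmbient r s)).comp Γ.subtype
  have i1 : Function.Injective p1 := by
    rw [injective_iff_map_eq_one]
    rintro ⟨⟨x, y⟩, hz⟩ hx
    change x = 1 at hx
    obtain ⟨N, m, h1, h2⟩ := inv _ hz
    simp only at h1 h2
    subst hx
    have hn : y.right.toAdd = 0 := by
      by_contra hn
      have hg : g ^ y.right.toAdd = (d N ^ m)⁻¹ := (inv_eq_of_mul_eq_one_right h1.symm).symm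
      have hc : Commute (g ^ y.right.toAdd) (d N) := by
        rw [hg]; exact ((Commute.refl _).zpow_left m).inv_left
      refine grs_nocomm g (d N) r s (hd N).2.2.2.2 habs (hd N).2.2.2.1
        y.right.toAdd.natAbs (by simpa using hn) ?_
      rcases Int.natAbs_eq y.right.toAdd with e | e
      · rw [e, zpow_natCast] at hc; exact hc
      · rw [e, zpow_neg, zpow_natCast] at hc; simpa using hc
    rw [hn, zpow_zero, mul_one] at h1
    have hm : m = 0 := by
      by_contra hm
      exact (hd N).2.2.2.2 (isOfFinOrder_iff_zpow_eq_one.2 ⟨m, hm, h1.symm⟩)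
    rw [hm] at h2
    have hy : y = 1 := by
      apply SemidirectProduct.ext
      · apply Multiplicative.toAdd.injective; simpa using h2
      · apply Multiplicative.toAdd.injective; simpa using hn
    subst hy; rfl
  have i2 : Function.Injective p2 := by
    rw [injective_iff_map_eq_one]
    rintro ⟨⟨x, y⟩, hz⟩ hx
    change y = 1 at hx
    obtain ⟨N, m, h1, h2⟩ := inv _ hz
    simp only at h1 h2
    subst hx
    have hm : m = 0 := by
      simpa [hr, hs] using h2.symm
    have : x = 1 := by simpa [hm] using h1
    subst this; rfl
  have r1 : p1.range = Subgroup.closure {a, g} := by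
    rw [MonoidHom.range_comp, Subgroup.range_subtype, MonoidHom.map_closure, Set.image_pair]; rfl
  have r2 : p2.range = Grs r s := by
    rw [MonoidHom.range_comp, Subgroup.range_subtype, MonoidHom.map_closure, Set.image_pair]; rfl
  exact ⟨(MulEquiv.subgroupCongr r1).symm.trans ((MonoidHom.ofInjective i1).symm.trans
    ((MonoidHom.ofInjective i2).trans (MulEquiv.subgroupCongr r2)))⟩

/-- A CT group which is not balanced contains a subgroup isomorphic to `G_{r,s}` for
some nonzero coprime `r, s` with `|r| ≠ |s|`; indeed if `g * a^r * g⁻¹ = a^s` with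
`a, g` of infinite order and `r, s` nonzero coprime with `|r| ≠ |s|`, then
`⟨a, g⟩ ≅ G_{r,s}`. -/
theorem ct_unbalanced_contains_grs {G : Type*} [Group G] (hct : IsCT G) :
    (¬ IsBalanced G → ∃ r s : ℤ, r ≠ 0 ∧ s ≠ 0 ∧ IsCoprime r s ∧ |r| ≠ |s| ∧
      ∃ H : Subgroup G, Nonempty (H ≃* Grs r s)) ∧
    (∀ (a g : G) (r s : ℤ), ¬ IsOfFinOrder a → ¬ IsOfFinOrder g → r ≠ 0 → s ≠ 0 →
      IsCoprime r s → |r| ≠ |s| → g * a ^ r * g⁻¹ = a ^ s →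
      Nonempty ((Subgroup.closure {a, g} : Subgroup G) ≃* Grs r s)) := by
  refine ⟨fun hb => ?_, fun a g r s ha _ hr hs hrs habs h =>
    grs_main hct a g r s ha hr hs hrs habs h⟩
  unfold IsBalanced at hb
  push Not at hb
  obtain ⟨x, hx, m, n, ⟨g, hg⟩, hmn⟩ := hb
  have hz : ∀ k : ℤ, x ^ k = 1 → k = 0 := fun k hk => by
    by_contra h0
    exact hx (isOfFinOrder_iff_zpow_eq_one.2 ⟨k, h0, hk⟩)
  have hm : m ≠ 0 := by
    rintro rfl
    have : n = 0 := hz n (by rw [← hg]; simp)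
    exact hmn (by rw [this])
  have hn : n ≠ 0 := by
    rintro rfl
    have : m = 0 := hz m (by rwa [zpow_zero, conj_eq_one_iff] at hg)
    exact hm this
  have hdz : ((Int.gcd m n : ℕ) : ℤ) ≠ 0 := by
    exact_mod_cast fun h0 => hm (Int.gcd_eq_zero_iff.1 h0).1
  obtain ⟨r, hr⟩ := Int.gcd_dvd_left m n
  obtain ⟨s, hs⟩ := Int.gcd_dvd_right m n
  have hcop : IsCoprime r s := by
    obtain ⟨u, v, huv⟩ : ∃ u v : ℤ, ((Int.gcd m n : ℕ) : ℤ) = m * u + n * v :=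
      ⟨_, _, Int.gcd_eq_gcd_ab m n⟩
    refine ⟨u, v, mul_left_cancel₀ hdz ?_⟩
    generalize ((Int.gcd m n : ℕ) : ℤ) = D at *
    rw [mul_one]
    conv_rhs => rw [huv, hr, hs]
    ring
  generalize ((Int.gcd m n : ℕ) : ℤ) = D at *
  subst hr hs
  have hr0 : r ≠ 0 := right_ne_zero_of_mul hm
  have hs0 : s ≠ 0 := right_ne_zero_of_mul hn
  have habs : |r| ≠ |s| := fun e => hmn (by rw [abs_mul, abs_mul, e])
  refine ⟨r, s, hr0, hs0, hcop, habs, Subgroup.closure {x ^ D, g},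
    grs_main hct (x ^ D) g r s ?_ hr0 hs0 hcop habs ?_⟩
  · intro hf
    obtain ⟨k, hk, hk1⟩ := isOfFinOrder_iff_zpow_eq_one.1 hf
    rw [← zpow_mul] at hk1
    exact (mul_ne_zero hdz hk) (hz _ hk1)
  · rw [← zpow_mul, ← zpow_mul, hg]
end
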